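/- Let 0 < a_1 < 1/2 and 0 < a_2 < √3/4, and let K_{a_1,a_2} be the attractor of the IFS on ℝ² given by S_1(v) = (1/2)v, S_2(v) = (1/2)v + (a_1, a_2), S_3(v) = (1/2)v + (1/4, √3/4) (an overlapping Sierpiński triangle), with canonical projection π : {1,2,3}^ℕ → K_{a_1,a_2}. Then the Hausdorff dimension of K_{a_1,a_2} is the unique real root t of the equation P_π(−t·log 2) = 0. -/

import Mathlib

/-!
For a constant potential `c` the partition function counts the level-`n` dyadic squares that
meet `K`, each weighted by `exp (n c)`, because the projection `π` is onto `K`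
(`exists_code`, `Zsum_const`). Hence the projection pressure is `boxRate K + c`
(`projPressure_const`), where `boxRate K / log 2` is the upper box dimension of `K`. With
`c = -t log 2` this has exactly one zero in `t`, namely the upper box dimension, and what
remains is that the Hausdorff and upper box dimensions of `K` agree
(`dimH_toReal_mul_log_two`). This holds for every self-similar set, whatever its overlaps.

Covering `K` by dyadic squares gives the upper bound on `dimH K` (`dimH_le_of_boxRate_lt`).
For the lower bound (`le_dimH_of_lt_boxRate`), let `t` be below the upper box dimension. For some
`n` the number of squares of side `2⁻ⁿ` meeting `K` exceeds a fixed multiple of `2^{nt}`, so one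
residue class of square indices modulo a large fixed `L` still has at least `2^{nt}` of them. Each
of these contains a point of `K`, which lies in a copy `c + 2⁻ⁿ K ⊆ K`, and these copies are
pairwise at distance at least `2⁻ⁿ`. The `m ≥ 2^{nt}` chosen similarities generate a Cantor subset
of `K` without overlaps; sending the point with code `d` to the number with base-`m` digits `d`
is Hölder of exponent `t` onto `[0, 1]`, so `dimH K ≥ t` (`le_dimH_of_separated`). This replaces
the usual mass distribution argument.
-/

/- Example 3.2: the overlapping Sierpiński triangle. Its Hausdorff dimension is the
   unique root of the Bowen equation `P_π(−t·log 2) = 0` for the projection pressure. -/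

open MeasureTheory Filter Set

noncomputable section

/-- The symbolic space `Σ = {1,2,3}^ℕ`. -/
abbrev Sig (l : ℕ) := ℕ → Fin l

/-- The left shift `σ` on `Σ`. -/
def shift {l : ℕ} (x : Sig l) : Sig l := fun n => x (n + 1)

/-- First-coordinate cylinder partition `P = {[j] : 1 ≤ j ≤ l}`. -/
def cylP {l : ℕ} : Fin l → Set (Sig l) := fun j => {x | x 0 = j}

/-- Conditional entropy `H_μ(ξ | 𝒜) = ∫ I_μ(ξ|𝒜) dμ` of a finite partition `ξ`
    given a sub-σ-algebra `𝒜`. -/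
def condEntropyPart {α : Type*} [MeasurableSpace α] {ι : Type*} [Fintype ι]
    (μ : Measure α) (part : ι → Set α) (m : MeasurableSpace α) : ℝ :=
  ∑ i : ι, ∫ x in part i,
    -Real.log ((μ[(part i).indicator (fun _ => (1 : ℝ)) | m]) x) ∂μ

/-- Projection entropy `h_π(σ,μ) = H_μ(P | σ⁻¹π⁻¹γ) − H_μ(P | π⁻¹γ)`. -/
def projEntropy {l : ℕ} {E : Type*} [mE : MeasurableSpace E]
    (π : Sig l → E) (μ : Measure (Sig l)) : ℝ :=
  condEntropyPart μ cylP (MeasurableSpace.comap (fun x => π (shift x)) mE)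
    - condEntropyPart μ cylP (MeasurableSpace.comap π mE)

/-- `itIm S K x n = S_{x 0} ∘ ⋯ ∘ S_{x (n-1)} (K)`. -/
def itIm {l : ℕ} {E : Type*} (S : Fin l → E → E) (K : Set E) : Sig l → ℕ → Set E
  | _, 0 => K
  | x, n + 1 => S (x 0) '' itIm S K (shift x) n

/-- The half-open unit square `[0,1)² + α` of the partition `𝒬` of `ℝ²`. -/
def cube (α : Fin 2 → ℤ) : Set (EuclideanSpace ℝ (Fin 2)) :=
  {x | ∀ i, (α i : ℝ) ≤ x i ∧ x i < (α i : ℝ) + 1}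

/-- The element `2^{-n}([0,1)² + α)` of the partition `𝒬_n = {2^{-n} Q : Q ∈ 𝒬}`. -/
def Qcube (n : ℕ) (α : Fin 2 → ℤ) : Set (EuclideanSpace ℝ (Fin 2)) :=
  (fun x : EuclideanSpace ℝ (Fin 2) => ((1 / 2 : ℝ) ^ n) • x) '' cube α

/-- Birkhoff sum `S_n g (x) = ∑_{i<n} g(σ^i x)`. -/
def birk {l : ℕ} (g : Sig l → ℝ) (n : ℕ) (x : Sig l) : ℝ :=
  ∑ i ∈ Finset.range n, g (shift^[i] x)

/-- The partition function
`∑_{Q ∈ 𝒬_n, Q ∩ K ≠ ∅} sup_{α ∈ π⁻¹(Q ∩ K)} exp((S_n f∘π)(α))`. -/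
def Zsum {l : ℕ} (K : Set (EuclideanSpace ℝ (Fin 2)))
    (π : Sig l → EuclideanSpace ℝ (Fin 2)) (f : EuclideanSpace ℝ (Fin 2) → ℝ)
    (n : ℕ) : ℝ :=
  ∑' α : Fin 2 → ℤ, ⨆ β ∈ π ⁻¹' (Qcube n α ∩ K), Real.exp (birk (fun y => f (π y)) n β)

/-- The projection pressure `P_π(f)` (Definition 2.3), realized as a `limsup`
(by Theorem 2.1 the limit exists). -/
def projPressure {l : ℕ} (K : Set (EuclideanSpace ℝ (Fin 2)))
    (π : Sig l → EuclideanSpace ℝ (Fin 2)) (f : EuclideanSpace ℝ (Fin 2) → ℝ) : ℝ :=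
  limsup (fun n : ℕ => Real.log (Zsum K π f n) / n) atTop

/-- The three maps `S₁ v = v/2`, `S₂ v = v/2 + (a₁,a₂)`, `S₃ v = v/2 + (1/4, √3/4)`
of the overlapping Sierpiński triangle IFS. -/
def sierpMap (a₁ a₂ : ℝ) : Fin 3 → EuclideanSpace ℝ (Fin 2) → EuclideanSpace ℝ (Fin 2) :=
  ![fun v => (1 / 2 : ℝ) • v,
    fun v => (1 / 2 : ℝ) • v + (WithLp.equiv 2 (Fin 2 → ℝ)).symm ![a₁, a₂],
    fun v => (1 / 2 : ℝ) • v + (WithLp.equiv 2 (Fin 2 → ℝ)).symm ![1 / 4, Real.sqrt 3 / 4]]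

/-! ### Dyadic box counts -/

/-- The Euclidean plane. -/
local notation "E2" => EuclideanSpace ℝ (Fin 2)

/-- The index `α` of the dyadic square `Qcube n α` containing `p`. -/
def boxIdx (n : ℕ) (p : E2) : Fin 2 → ℤ := fun i => ⌊(2 : ℝ) ^ n * p i⌋

/-- The number of level-`n` dyadic squares that meet `K`. -/
def boxCount (K : Set E2) (n : ℕ) : ℕ := (boxIdx n '' K).ncard

lemma mem_Qcube_iff (n : ℕ) (α : Fin 2 → ℤ) (p : E2) : p ∈ Qcube n α ↔ boxIdx n p = α := by
  have h2 : (0 : ℝ) < 2 ^ n := by positivity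
  have hmul : ((1 / 2 : ℝ) ^ n) * 2 ^ n = 1 := by rw [← mul_pow]; norm_num
  constructor
  · rintro ⟨x, hx, rfl⟩
    funext i
    simp only [boxIdx, PiLp.smul_apply, smul_eq_mul]
    rw [← mul_assoc, mul_comm ((2 : ℝ) ^ n), hmul, one_mul, Int.floor_eq_iff]
    exact hx i
  · rintro rfl
    refine ⟨(2 : ℝ) ^ n • p, fun i => ?_, ?_⟩
    · simp only [boxIdx, PiLp.smul_apply, smul_eq_mul]
      exact ⟨Int.floor_le _, Int.lt_floor_add_one _⟩
    · simp only [smul_smul, hmul, one_smul]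

lemma boxIdx_image_subset {K : Set E2} {M : ℕ} (hM : ∀ p ∈ K, ‖p‖ ≤ M) (n : ℕ) :
    boxIdx n '' K ⊆ (Fintype.piFinset fun _ : Fin 2 =>
      Finset.Icc (-((M * 2 ^ n : ℕ) : ℤ)) ((M * 2 ^ n : ℕ) : ℤ) : Finset (Fin 2 → ℤ)) := by
  rintro _ ⟨p, hp, rfl⟩
  simp only [Finset.mem_coe, Fintype.mem_piFinset, Finset.mem_Icc]
  intro i
  have h1 : |p i| ≤ M := by
    simpa using (PiLp.norm_apply_le p i).trans (hM p hp)
  have h3 := abs_le.1 h1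
  have h2 : (0 : ℝ) < 2 ^ n := by positivity
  constructor
  · apply Int.le_floor.2
    push_cast
    nlinarith
  · have : ((⌊(2 : ℝ) ^ n * p i⌋ : ℤ) : ℝ) ≤ ((M * 2 ^ n : ℕ) : ℤ) := by
      refine (Int.floor_le _).trans ?_
      push_cast
      nlinarith
    exact Int.cast_le.1 this

lemma boxIdx_image_finite {K : Set E2} (hK : Bornology.IsBounded K) (n : ℕ) :
    (boxIdx n '' K).Finite := by
  obtain ⟨R, hR⟩ := hK.exists_norm_le
  obtain ⟨M, hM⟩ := exists_nat_ge R
  exact (Finset.finite_toSet _).subset (boxIdx_image_subset (fun p hp => (hR p hp).trans hM) n)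

lemma boxCount_le {K : Set E2} {M : ℕ} (hM : ∀ p ∈ K, ‖p‖ ≤ M) (n : ℕ) :
    boxCount K n ≤ ((2 * M + 1) * 2 ^ n) ^ 2 := by
  refine (Set.ncard_le_ncard (boxIdx_image_subset hM n) (Finset.finite_toSet _)).trans ?_
  rw [Set.ncard_coe_finset, Fintype.card_piFinset]
  simp only [Int.card_Icc, Finset.prod_const, Finset.card_univ, Fintype.card_fin]
  have h1 : 1 ≤ 2 ^ n := Nat.one_le_two_pow
  refine Nat.pow_le_pow_left ?_ 2
  have : (((M * 2 ^ n : ℕ) : ℤ) + 1 - -((M * 2 ^ n : ℕ) : ℤ)).toNat = 2 * (M * 2 ^ n) + 1 := by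
    omega
  rw [this]
  nlinarith

lemma boxCount_pos {K : Set E2} (hK : Bornology.IsBounded K) (hne : K.Nonempty) (n : ℕ) :
    0 < boxCount K n :=
  (Set.ncard_pos (boxIdx_image_finite hK n)).2 (hne.image _)

/-- Exponential growth rate of the box counts: `log 2` times the upper box dimension. -/
def boxRate (K : Set E2) : ℝ := limsup (fun n : ℕ => Real.log (boxCount K n) / n) atTop

lemma log_boxCount_div_nonneg (K : Set E2) (n : ℕ) : 0 ≤ Real.log (boxCount K n) / n :=
  div_nonneg (Real.log_natCast_nonneg _) (Nat.cast_nonneg _)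

lemma isBoundedUnder_rate {K : Set E2} (hK : Bornology.IsBounded K) (hne : K.Nonempty) :
    IsBoundedUnder (· ≤ ·) atTop (fun n : ℕ => Real.log (boxCount K n) / n) := by
  obtain ⟨R, hR⟩ := hK.exists_norm_le
  obtain ⟨M, hM⟩ := exists_nat_ge R
  refine isBoundedUnder_of ⟨2 * (Real.log (2 * M + 1) + Real.log 2), fun n => ?_⟩
  have hM0 : 0 ≤ Real.log (2 * M + 1) := Real.log_nonneg (by linarith [Nat.cast_nonneg (α := ℝ) M])
  rcases Nat.eq_zero_or_pos n with rfl | hn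
  · simp only [Nat.cast_zero, div_zero]
    have := Real.log_nonneg (one_le_two : (1 : ℝ) ≤ 2)
    linarith
  have hn1 : (1 : ℝ) ≤ n := by exact_mod_cast hn
  rw [div_le_iff₀ (by linarith)]
  have hle : (boxCount K n : ℝ) ≤ ((2 * M + 1) * 2 ^ n) ^ 2 := by
    exact_mod_cast boxCount_le (fun p hp => (hR p hp).trans hM) n
  have hpos : (0 : ℝ) < boxCount K n := by exact_mod_cast boxCount_pos hK hne n
  refine (Real.log_le_log hpos hle).trans ?_
  rw [Real.log_pow, Real.log_mul (by positivity) (by positivity), Real.log_pow]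
  push_cast
  nlinarith

lemma isCoboundedUnder_rate (K : Set E2) :
    IsCoboundedUnder (· ≤ ·) atTop (fun n : ℕ => Real.log (boxCount K n) / n) :=
  (isBoundedUnder_of ⟨0, fun n => log_boxCount_div_nonneg K n⟩ :
    IsBoundedUnder (· ≥ ·) atTop _).isCoboundedUnder_le

lemma boxRate_nonneg {K : Set E2} (hK : Bornology.IsBounded K) (hne : K.Nonempty) :
    0 ≤ boxRate K :=
  le_limsup_of_frequently_le (Frequently.of_forall fun n => log_boxCount_div_nonneg K n)
    (isBoundedUnder_rate hK hne)

/-! ### Projection pressure of constant potentials -/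

lemma birk_const {l : ℕ} (c : ℝ) (n : ℕ) (x : Sig l) : birk (fun _ => c) n x = n * c := by
  simp [birk]

/-- For a constant potential the partition function is the box count times `exp (n c)`.
The inner supremum over an empty fibre is `0`, so squares missing `K` do not contribute. -/
lemma Zsum_const {K : Set E2} (hK : Bornology.IsBounded K) (π : Sig 3 → E2)
    (hsurj : ∀ p ∈ K, ∃ x, π x = p) (c : ℝ) (n : ℕ) :
    Zsum K π (fun _ => c) n = boxCount K n * Real.exp (n * c) := by
  classical
  have hfin := boxIdx_image_finite hK n
  have hterm : ∀ α : Fin 2 → ℤ,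
      (⨆ β ∈ π ⁻¹' (Qcube n α ∩ K), Real.exp (birk (fun y => (fun _ => c) (π y)) n β))
        = if α ∈ boxIdx n '' K then Real.exp (n * c) else 0 := by
    intro α
    simp only [birk_const]
    have hin : ∀ β : Sig 3, (⨆ _ : β ∈ π ⁻¹' (Qcube n α ∩ K), Real.exp (n * c))
        = if β ∈ π ⁻¹' (Qcube n α ∩ K) then Real.exp (n * c) else 0 := by
      intro β
      by_cases h : β ∈ π ⁻¹' (Qcube n α ∩ K)
      · rw [if_pos h, ciSup_pos h]
      · rw [if_neg h]
        have : IsEmpty (β ∈ π ⁻¹' (Qcube n α ∩ K)) := ⟨h⟩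
        exact Real.iSup_of_isEmpty _
    simp only [hin]
    split_ifs with h
    · obtain ⟨p, hp, hpα⟩ := h
      obtain ⟨x, rfl⟩ := hsurj p hp
      have hx : x ∈ π ⁻¹' (Qcube n α ∩ K) := ⟨(mem_Qcube_iff n α _).2 hpα, hp⟩
      have hle : ∀ β : Sig 3, (if β ∈ π ⁻¹' (Qcube n α ∩ K) then Real.exp (n * c) else 0)
          ≤ Real.exp (n * c) := by
        intro β
        split_ifs
        · exact le_rfl
        · exact (Real.exp_pos _).le
      refine le_antisymm (ciSup_le hle) ?_
      refine le_ciSup_of_le ⟨Real.exp (n * c), ?_⟩ x (by rw [if_pos hx])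
      rintro _ ⟨β, rfl⟩
      exact hle β
    · have : ∀ β : Sig 3, β ∉ π ⁻¹' (Qcube n α ∩ K) := fun β hβ =>
        h ⟨π β, hβ.2, (mem_Qcube_iff n α _).1 hβ.1⟩
      simp only [if_neg (this _), Real.iSup_const_zero]
  unfold Zsum
  simp only [hterm]
  rw [tsum_eq_sum (s := hfin.toFinset) (fun α hα => by
    rw [if_neg]; simpa using hα)]
  rw [Finset.sum_congr rfl (fun α hα => if_pos (hfin.mem_toFinset.1 hα)), Finset.sum_const,
    nsmul_eq_mul, boxCount, Set.ncard_eq_toFinset_card _ hfin]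

/-- The projection pressure of a constant potential is an affine function of the constant. -/
lemma projPressure_const {K : Set E2} (hK : Bornology.IsBounded K) (hne : K.Nonempty)
    (π : Sig 3 → E2) (hsurj : ∀ p ∈ K, ∃ x, π x = p) (c : ℝ) :
    projPressure K π (fun _ => c) = boxRate K + c := by
  rw [boxRate, ← limsup_add_const atTop _ c (isBoundedUnder_rate hK hne)
    (isCoboundedUnder_rate K)]
  refine limsup_congr ?_
  filter_upwards [eventually_gt_atTop 0] with n hn
  have hn' : (n : ℝ) ≠ 0 := by positivity
  have hpos : (boxCount K n : ℝ) ≠ 0 := by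
    exact_mod_cast (boxCount_pos hK hne n).ne'
  rw [Zsum_const hK π hsurj, Real.log_mul hpos (Real.exp_ne_zero _), Real.log_exp]
  field_simp

/-! ### Hausdorff dimension is at most box dimension -/

/-- Two points in the same dyadic square of level `n` are at distance at most `2 · 2⁻ⁿ`. -/
lemma dist_le_of_boxIdx_eq {n : ℕ} {p q : E2} (h : boxIdx n p = boxIdx n q) :
    dist p q ≤ 2 * (1 / 2) ^ n := by
  have h2 : (0 : ℝ) < 2 ^ n := by positivity
  have hc : ∀ i, (dist (p i) (q i)) ^ 2 ≤ ((1 / 2 : ℝ) ^ n) ^ 2 := by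
    intro i
    have := Int.abs_sub_lt_one_of_floor_eq_floor (congrFun h i)
    rw [← mul_sub, abs_mul, abs_of_pos h2] at this
    rw [Real.dist_eq]
    refine pow_le_pow_left₀ (abs_nonneg _) ?_ 2
    rw [one_div, inv_pow, ← one_div, le_div_iff₀ h2]
    linarith
  rw [EuclideanSpace.dist_eq, Fin.sum_univ_two]
  apply Real.sqrt_le_iff.2
  refine ⟨by positivity, ?_⟩
  have h0 := hc 0
  have h1 := hc 1
  nlinarith [sq_nonneg ((1 / 2 : ℝ) ^ n)]

/-- The Hausdorff dimension is at most the upper box dimension. -/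
lemma dimH_le_of_boxRate_lt {K : Set E2} (hK : Bornology.IsBounded K) (hne : K.Nonempty)
    {d : NNReal} (hd : boxRate K < d * Real.log 2) : dimH K ≤ d := by
  have hl2 : 0 < Real.log 2 := Real.log_pos one_lt_two
  obtain ⟨e, he1, he2⟩ := exists_between hd
  have hev : ∀ᶠ n : ℕ in atTop, Real.log (boxCount K n) / n < e :=
    eventually_lt_of_limsup_lt he1 (isBoundedUnder_rate hK hne)
  have hd0 : 0 ≤ (d : ℝ) := d.2
  have hr : Tendsto (fun n : ℕ => 2 * (1 / 2 : ℝ) ^ n) atTop (nhds 0) := by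
    simpa using (tendsto_pow_atTop_nhds_zero_of_lt_one (r := (1 / 2 : ℝ)) (by norm_num)
      (by norm_num)).const_mul 2
  have hfin := boxIdx_image_finite hK
  have : ∀ n, Fintype (boxIdx n '' K) := fun n => (hfin n).fintype
  have hdiam : ∀ (n : ℕ) (α : boxIdx n '' K),
      Metric.ediam {x ∈ K | boxIdx n x = α} ≤ ENNReal.ofReal (2 * (1 / 2 : ℝ) ^ n) := by
    intro n α
    refine Metric.ediam_le fun x hx y hy => ?_
    rw [edist_dist]
    exact ENNReal.ofReal_le_ofReal (dist_le_of_boxIdx_eq (hx.2.trans hy.2.symm))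
  have hmeas := Measure.hausdorffMeasure_le_liminf_sum (d : ℝ) K (l := atTop)
    (fun n : ℕ => ENNReal.ofReal (2 * (1 / 2 : ℝ) ^ n))
    (by simpa using ENNReal.tendsto_ofReal hr)
    (fun n (α : boxIdx n '' K) => {x ∈ K | boxIdx n x = α})
    (Eventually.of_forall hdiam)
    (Eventually.of_forall fun n x hx => mem_iUnion.2 ⟨⟨boxIdx n x, x, hx, rfl⟩, hx, rfl⟩)
  have hbound : ∀ᶠ n : ℕ in atTop,
      ∑ α : boxIdx n '' K, Metric.ediam {x ∈ K | boxIdx n x = α} ^ (d : ℝ)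
        ≤ ENNReal.ofReal (2 ^ (d : ℝ) * Real.exp (e - d * Real.log 2) ^ n) := by
    filter_upwards [hev, eventually_gt_atTop 0] with n hn hn0
    have hn0' : (0 : ℝ) < n := by exact_mod_cast hn0
    have hpos : (0 : ℝ) < boxCount K n := by exact_mod_cast boxCount_pos hK hne n
    calc ∑ α : boxIdx n '' K, Metric.ediam {x ∈ K | boxIdx n x = α} ^ (d : ℝ)
        ≤ ∑ α : boxIdx n '' K, ENNReal.ofReal (2 * (1 / 2 : ℝ) ^ n) ^ (d : ℝ) :=
          Finset.sum_le_sum fun α _ => ENNReal.rpow_le_rpow (hdiam n α) hd0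
      _ = ENNReal.ofReal (boxCount K n * (2 * (1 / 2 : ℝ) ^ n) ^ (d : ℝ)) := by
          rw [Finset.sum_const, nsmul_eq_mul, Finset.card_univ, ← Nat.card_eq_fintype_card,
            Nat.card_coe_set_eq, ENNReal.ofReal_rpow_of_nonneg (by positivity) hd0,
            ENNReal.ofReal_mul (by positivity), ENNReal.ofReal_natCast]
          rfl
      _ ≤ _ := by
          apply ENNReal.ofReal_le_ofReal
          rw [Real.mul_rpow (by norm_num) (by positivity), mul_left_comm]
          refine mul_le_mul_of_nonneg_left ?_ (by positivity)
          have h1 : (boxCount K n : ℝ) ≤ Real.exp (n * e) := by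
            rw [← Real.log_le_iff_le_exp hpos]
            rw [div_lt_iff₀ hn0'] at hn
            linarith
          have h2 : ((1 / 2 : ℝ) ^ n) ^ (d : ℝ) = Real.exp (-(n * (d * Real.log 2))) := by
            rw [Real.rpow_def_of_pos (by positivity), Real.log_pow, one_div, Real.log_inv]
            congr 1
            ring
          rw [h2, ← Real.exp_nat_mul, mul_sub, sub_eq_add_neg, Real.exp_add]
          exact mul_le_mul_of_nonneg_right h1 (Real.exp_pos _).le
  have hlim : Tendsto (fun n : ℕ => ENNReal.ofReal
      (2 ^ (d : ℝ) * Real.exp (e - d * Real.log 2) ^ n)) atTop (nhds 0) := by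
    have h1 : Real.exp (e - d * Real.log 2) < 1 := Real.exp_lt_one_iff.2 (by linarith)
    have := (tendsto_pow_atTop_nhds_zero_of_lt_one (Real.exp_pos _).le h1).const_mul
      ((2 : ℝ) ^ (d : ℝ))
    simpa using ENNReal.tendsto_ofReal this
  have h0 : μH[(d : ℝ)] K ≤ 0 := by
    refine hmeas.trans ?_
    rw [← hlim.liminf_eq]
    exact liminf_le_liminf hbound
  refine dimH_le_of_hausdorffMeasure_ne_top ?_
  rw [nonpos_iff_eq_zero.1 h0]
  exact ENNReal.zero_ne_top

/-! ### Separated subsystems bound the Hausdorff dimension from below -/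

/-- Coding map `d ↦ ∑ ρᵏ c(dₖ)` of the homogeneous iterated function system
`x ↦ c j + ρ x`. -/
def code {m : ℕ} (ρ : ℝ) (c : Fin m → E2) (d : ℕ → Fin m) : E2 := ∑' k, ρ ^ k • c (d k)

lemma summable_code {m : ℕ} {ρ : ℝ} (h0 : 0 < ρ) (h1 : ρ < 1) (c : Fin m → E2)
    (d : ℕ → Fin m) : Summable fun k => ρ ^ k • c (d k) := by
  refine Summable.of_norm_bounded
    (g := fun k => ρ ^ k * ∑ j, ‖c j‖) ((summable_geometric_of_lt_one h0.le h1).mul_right _) ?_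
  intro k
  rw [norm_smul, Real.norm_of_nonneg (by positivity)]
  refine mul_le_mul_of_nonneg_left ?_ (by positivity)
  exact Finset.single_le_sum (f := fun j => ‖c j‖) (fun j _ => norm_nonneg _)
    (Finset.mem_univ (d k))

lemma code_eq {m : ℕ} {ρ : ℝ} (h0 : 0 < ρ) (h1 : ρ < 1) (c : Fin m → E2)
    (d : ℕ → Fin m) (n : ℕ) :
    code ρ c d = (∑ k ∈ Finset.range n, ρ ^ k • c (d k)) + ρ ^ n • code ρ c (fun k => d (k + n)) := by
  unfold code
  rw [← (summable_code h0 h1 c d).sum_add_tsum_nat_add n,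
    ← (summable_code h0 h1 c _).tsum_const_smul]
  congr 2
  funext k
  rw [smul_smul, pow_add, mul_comm]

lemma code_mem {K : Set E2} (hK : IsClosed K) (hne : K.Nonempty) {m : ℕ} {ρ : ℝ}
    (h0 : 0 < ρ) (h1 : ρ < 1) (c : Fin m → E2) (hmap : ∀ j, ∀ x ∈ K, c j + ρ • x ∈ K)
    (d : ℕ → Fin m) : code ρ c d ∈ K := by
  obtain ⟨x, hx⟩ := hne
  have hpart : ∀ n, ∀ x ∈ K, (∑ k ∈ Finset.range n, ρ ^ k • c (d k)) + ρ ^ n • x ∈ K := by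
    intro n
    induction n with
    | zero => intro x hx; simpa using hx
    | succ n ih =>
      intro x hx
      have := ih _ (hmap (d n) x hx)
      rwa [smul_add, ← add_assoc, smul_smul, ← pow_succ, ← Finset.sum_range_succ
        (fun k => ρ ^ k • c (d k))] at this
  have hlim : Tendsto (fun n => (∑ k ∈ Finset.range n, ρ ^ k • c (d k)) + ρ ^ n • x) atTop
      (nhds (code ρ c d + (0 : ℝ) • x)) :=
    (summable_code h0 h1 c d).hasSum.tendsto_sum_nat.add
      ((tendsto_pow_atTop_nhds_zero_of_lt_one h0.le h1).smul_const x)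
  rw [zero_smul, add_zero] at hlim
  exact hK.mem_of_tendsto hlim (Eventually.of_forall fun n => hpart n x hx)

/-- If `K` contains `m` separated copies of itself of ratio `ρ`, its dimension is at least the
similarity dimension of that subsystem. The inverse coding map followed by base-`m` expansion
is Hölder of exponent `s` from a subset of `K` onto `[0, 1]`. -/
lemma le_dimH_of_separated {K : Set E2} (hK : IsClosed K) (hne : K.Nonempty) {m : ℕ}
    (hm : 1 < m) {ρ : ℝ} (h0 : 0 < ρ) (h1 : ρ < 1) (c : Fin m → E2)
    (hmap : ∀ j, ∀ x ∈ K, c j + ρ • x ∈ K)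
    (hsep : ∀ i j, i ≠ j → ∀ x ∈ K, ∀ y ∈ K, ρ ≤ dist (c i + ρ • x) (c j + ρ • y))
    {s : NNReal} (hs0 : 0 < s) (hs : 1 ≤ m * ρ ^ (s : ℝ)) : (s : ENNReal) ≤ dimH K := by
  have hmem := code_mem hK hne h0 h1 c hmap
  have hm0 : (0 : ℝ) < m := by exact_mod_cast (zero_lt_one.trans hm)
  have hsplit : ∀ d d' : ℕ → Fin m, d ≠ d' → ∃ n, (∀ i < n, d i = d' i) ∧
      ρ ^ (n + 1) ≤ dist (code ρ c d) (code ρ c d') := by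
    intro d d' hdd
    have hex : ∃ n, d n ≠ d' n := Function.ne_iff.1 hdd
    classical
    have hlt : ∀ i < Nat.find hex, d i = d' i := fun i hi => not_not.1 (Nat.find_min hex hi)
    refine ⟨Nat.find hex, hlt, ?_⟩
    have hn := Nat.find_spec hex
    generalize Nat.find hex = n at hlt hn
    have hstep : ∀ e : ℕ → Fin m, code ρ c (fun k => e (k + n))
        = c (e n) + ρ • code ρ c (fun k => e (k + 1 + n)) := by
      intro e
      rw [code_eq h0 h1 c _ 1]
      simp
    rw [code_eq h0 h1 c d n, code_eq h0 h1 c d' n, Finset.sum_congr rfl (fun k hk => by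
      rw [hlt k (Finset.mem_range.1 hk)]), dist_add_left, dist_smul₀, hstep d, hstep d', pow_succ,
      Real.norm_of_nonneg (by positivity)]
    exact mul_le_mul_of_nonneg_left (hsep _ _ hn _ (hmem _) _ (hmem _)) (by positivity)
  have hinj : Function.Injective (code ρ c) := by
    intro d d' h
    by_contra hdd
    obtain ⟨n, -, hn⟩ := hsplit d d' hdd
    rw [h, dist_self] at hn
    exact absurd hn (not_le.2 (by positivity))
  have : Nonempty (ℕ → Fin m) := ⟨fun _ => ⟨0, by omega⟩⟩
  let f : E2 → ℝ := fun p => Real.ofDigits (Function.invFun (code ρ c) p)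
  have hf : ∀ d, f (code ρ c d) = Real.ofDigits d := fun d => by
    simp only [f, Function.leftInverse_invFun hinj d]
  have hholder : HolderOnWith (Real.toNNReal ((ρ ^ (s : ℝ))⁻¹)) s f (range (code ρ c)) := by
    rintro _ ⟨d, rfl⟩ _ ⟨d', rfl⟩
    rw [hf, hf]
    by_cases hdd : d = d'
    · subst hdd
      simp
    obtain ⟨n, hn1, hn2⟩ := hsplit d d' hdd
    rw [edist_dist, edist_dist, ENNReal.ofReal_rpow_of_nonneg dist_nonneg s.coe_nonneg]
    change _ ≤ ENNReal.ofReal _ * _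
    rw [← ENNReal.ofReal_mul (by positivity)]
    apply ENNReal.ofReal_le_ofReal
    rw [Real.dist_eq]
    refine (Real.abs_ofDigits_sub_ofDigits_le hn1).trans ?_
    have hρs : 0 < ρ ^ (s : ℝ) := by positivity
    have hA : ((m : ℝ) ^ n)⁻¹ ≤ (ρ ^ (s : ℝ)) ^ n := by
      rw [inv_le_iff_one_le_mul₀ (by positivity), ← mul_pow, mul_comm]
      exact one_le_pow₀ hs
    have hB : (ρ ^ (s : ℝ)) ^ (n + 1) ≤ dist (code ρ c d) (code ρ c d') ^ (s : ℝ) := by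
      have := Real.rpow_le_rpow (by positivity) hn2 s.2
      rwa [← Real.rpow_natCast, ← Real.rpow_mul h0.le, mul_comm, Real.rpow_mul h0.le,
        Real.rpow_natCast] at this
    refine hA.trans ?_
    rw [← div_eq_inv_mul, le_div_iff₀ hρs, ← pow_succ]
    exact hB
  have himg : f '' range (code ρ c) = range (Real.ofDigits (b := m)) := by
    rw [← range_comp]
    congr 1
    funext d
    exact hf d
  have hIcc : (1 : ENNReal) ≤ dimH (range (Real.ofDigits (b := m))) := by
    have h := Real.dimH_of_mem_nhds (E := ℝ) (Icc_mem_nhds (a := (0 : ℝ)) (b := 1) (x := 1 / 2)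
      (by norm_num) (by norm_num))
    rw [Module.finrank_self, Nat.cast_one] at h
    rw [← h, ← image_univ]
    exact dimH_mono (Real.ofDigits_SurjOn hm)
  have hfinal := hholder.dimH_image_le hs0
  rw [himg] at hfinal
  have h1s := (hIcc.trans hfinal)
  have hs0' : (s : ENNReal) ≠ 0 := by exact_mod_cast hs0.ne'
  rw [ENNReal.le_div_iff_mul_le (Or.inl hs0') (Or.inl ENNReal.coe_ne_top), one_mul] at h1s
  refine h1s.trans (dimH_mono ?_)
  rintro _ ⟨d, rfl⟩
  exact hmem d

/-! ### Equality of Hausdorff and upper box dimension under overlaps -/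

/-- Every point of `K` lies in a copy `c + 2⁻ⁿ K ⊆ K` of generation `n`. -/
lemma exists_copy {K : Set E2} {b : Fin 3 → E2}
    (hsub : ∀ i, ∀ v ∈ K, (1 / 2 : ℝ) • v + b i ∈ K)
    (hcov : ∀ p ∈ K, ∃ i, ∃ q ∈ K, (1 / 2 : ℝ) • q + b i = p) (n : ℕ) :
    ∀ p ∈ K, ∃ c : E2, (∃ q ∈ K, c + (1 / 2 : ℝ) ^ n • q = p) ∧
      ∀ v ∈ K, c + (1 / 2 : ℝ) ^ n • v ∈ K := by
  induction n with
  | zero => exact fun p hp => ⟨0, ⟨p, hp, by simp⟩, fun v hv => by simpa using hv⟩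
  | succ n ih =>
    intro p hp
    obtain ⟨c, ⟨q, hq, rfl⟩, hc⟩ := ih p hp
    obtain ⟨i, q', hq', rfl⟩ := hcov q hq
    have key : ∀ v : E2, (c + (1 / 2 : ℝ) ^ n • b i) + (1 / 2 : ℝ) ^ (n + 1) • v
        = c + (1 / 2 : ℝ) ^ n • ((1 / 2 : ℝ) • v + b i) := by
      intro v
      rw [smul_add, smul_smul, ← pow_succ]
      abel
    refine ⟨c + (1 / 2 : ℝ) ^ n • b i, ⟨q', hq', key q'⟩, fun v hv => ?_⟩
    rw [key]
    exact hc _ (hsub i v hv)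

/-- Points in distinct dyadic squares with congruent indices modulo `L` are far apart. -/
lemma le_dist_of_boxIdx_modEq {n L : ℕ} {p q : E2} (hne : boxIdx n p ≠ boxIdx n q)
    (hmod : ∀ i, boxIdx n p i % (L : ℤ) = boxIdx n q i % (L : ℤ)) :
    ((L : ℝ) - 1) * (1 / 2) ^ n ≤ dist p q := by
  obtain ⟨i, hi⟩ := Function.ne_iff.1 hne
  have hdvd : (L : ℤ) ∣ boxIdx n p i - boxIdx n q i :=
    Int.ModEq.dvd (show Int.ModEq (L : ℤ) (boxIdx n q i) (boxIdx n p i) from (hmod i).symm)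
  have hL : (L : ℤ) ≤ |boxIdx n p i - boxIdx n q i| :=
    Int.le_of_dvd (abs_pos.2 (sub_ne_zero.2 hi)) ((dvd_abs _ _).2 hdvd)
  have hL' : (L : ℝ) ≤ |(boxIdx n p i : ℝ) - boxIdx n q i| := by exact_mod_cast hL
  have h2 : (0 : ℝ) < 2 ^ n := by positivity
  have hp1 : (boxIdx n p i : ℝ) ≤ 2 ^ n * p i := Int.floor_le _
  have hp2 : 2 ^ n * p i < (boxIdx n p i : ℝ) + 1 := Int.lt_floor_add_one _
  have hq1 : (boxIdx n q i : ℝ) ≤ 2 ^ n * q i := Int.floor_le _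
  have hq2 : 2 ^ n * q i < (boxIdx n q i : ℝ) + 1 := Int.lt_floor_add_one _
  have hfl : (L : ℝ) - 1 ≤ 2 ^ n * |p i - q i| := by
    rw [show (2 : ℝ) ^ n * |p i - q i| = |2 ^ n * p i - 2 ^ n * q i| by
      rw [← mul_sub, abs_mul, abs_of_pos h2]]
    rcases abs_cases ((boxIdx n p i : ℝ) - boxIdx n q i) with h | h
    · exact le_trans (by linarith) (le_abs_self _)
    · exact le_trans (by linarith) (neg_le_abs _)
  have hco : |p i - q i| ≤ dist p q := by
    rw [dist_eq_norm]
    simpa using PiLp.norm_apply_le (p - q) i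
  rw [one_div, inv_pow, ← div_eq_mul_inv, div_le_iff₀ h2]
  nlinarith

/-- The Hausdorff dimension of a homogeneous self-similar set, with arbitrary overlaps, is at
least its upper box dimension. -/
lemma le_dimH_of_lt_boxRate {K : Set E2} (hK : IsCompact K) (hne : K.Nonempty) {b : Fin 3 → E2}
    (hsub : ∀ i, ∀ v ∈ K, (1 / 2 : ℝ) • v + b i ∈ K)
    (hcov : ∀ p ∈ K, ∃ i, ∃ q ∈ K, (1 / 2 : ℝ) • q + b i = p)
    {t : NNReal} (ht0 : 0 < t) (ht : t * Real.log 2 < boxRate K) : (t : ENNReal) ≤ dimH K := by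
  classical
  have hl2 : 0 < Real.log 2 := Real.log_pos one_lt_two
  have htr : (0 : ℝ) < t := ht0
  obtain ⟨D, hD⟩ := Metric.isBounded_iff.1 hK.isBounded
  obtain ⟨L, hL⟩ := exists_nat_ge (max (2 * D + 2) 1)
  have hL1 : (1 : ℝ) ≤ L := (le_max_right _ _).trans hL
  have hLD : 2 * D + 2 ≤ (L : ℝ) := (le_max_left _ _).trans hL
  have hLpos : 0 < (L : ℤ) := by exact_mod_cast (zero_lt_one.trans_le hL1)
  obtain ⟨e, he1, he2⟩ := exists_between ht
  have hfreq : ∃ᶠ n : ℕ in atTop, e < Real.log (boxCount K n) / n :=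
    frequently_lt_of_lt_limsup (isCoboundedUnder_rate K) he2
  have hbig : ∀ᶠ n : ℕ in atTop, Real.log ((L : ℝ) ^ 2) ≤ n * (e - t * Real.log 2) :=
    (tendsto_natCast_atTop_atTop.atTop_mul_const (sub_pos.2 he1)).eventually_ge_atTop _
  obtain ⟨n, hn, hnL, hn0⟩ := (hfreq.and_eventually (hbig.and (eventually_gt_atTop 0))).exists
  have hn0' : (0 : ℝ) < n := by exact_mod_cast hn0
  have hNpos : (0 : ℝ) < boxCount K n := by exact_mod_cast boxCount_pos hK.isBounded hne n
  -- The box count beats `L²` copies of the target `2^{nt}`.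
  have hcount : (L : ℝ) ^ 2 * Real.exp (n * (t * Real.log 2)) ≤ boxCount K n := by
    rw [← Real.log_le_log_iff (by positivity) hNpos, Real.log_mul (by positivity)
      (Real.exp_ne_zero _), Real.log_exp]
    rw [lt_div_iff₀ hn0'] at hn
    nlinarith
  have hfin := boxIdx_image_finite hK.isBounded n
  -- Pigeonhole: one residue class modulo `L` keeps at least `2^{nt}` squares.
  obtain ⟨r, -, hr⟩ := Finset.exists_le_card_fiber_of_nsmul_le_card_of_maps_to
    (s := hfin.toFinset) (t := Fintype.piFinset fun _ : Fin 2 => Finset.Ico (0 : ℤ) L)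
    (f := fun α i => α i % (L : ℤ)) (b := Real.exp (n * (t * Real.log 2)))
    (fun α _ => by
      simp only [Fintype.mem_piFinset, Finset.mem_Ico]
      exact fun i => ⟨Int.emod_nonneg _ hLpos.ne', Int.emod_lt_of_pos _ hLpos⟩)
    ⟨0, by simpa using hLpos⟩
    (by
      rw [← Set.ncard_eq_toFinset_card _ hfin, nsmul_eq_mul, Fintype.card_piFinset]
      simpa [boxCount] using hcount)
  set A := {α ∈ hfin.toFinset | (fun i => α i % (L : ℤ)) = r} with hA
  have hexp1 : 1 < Real.exp (n * (t * Real.log 2)) := Real.one_lt_exp_iff.2 (by positivity)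
  have hm : 1 < A.card := by exact_mod_cast hexp1.trans_le hr
  -- For every kept square, a point of `K` in it and a generation-`n` copy containing the point.
  have hchoose : ∀ α : A, ∃ c p : E2, boxIdx n p = α ∧ (∃ q ∈ K, c + (1 / 2 : ℝ) ^ n • q = p) ∧
      ∀ v ∈ K, c + (1 / 2 : ℝ) ^ n • v ∈ K := by
    intro α
    obtain ⟨p, hp, hpα⟩ := hfin.mem_toFinset.1 (Finset.mem_filter.1 α.2).1
    obtain ⟨c, h1, h2⟩ := exists_copy hsub hcov n p hp
    exact ⟨c, p, hpα, h1, h2⟩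
  choose c p hpα hq hcmap using hchoose
  choose q hqK hqp using hq
  have hρ0 : (0 : ℝ) < (1 / 2) ^ n := by positivity
  have hρ1 : ((1 : ℝ) / 2) ^ n < 1 := pow_lt_one₀ (by norm_num) (by norm_num) hn0.ne'
  have hpiece : ∀ α : A, ∀ x ∈ K, dist (c α + (1 / 2 : ℝ) ^ n • x) (p α) ≤ (1 / 2) ^ n * D := by
    intro α x hx
    rw [← hqp α, dist_add_left, dist_smul₀, Real.norm_of_nonneg hρ0.le]
    exact mul_le_mul_of_nonneg_left (hD hx (hqK α)) hρ0.le
  refine le_dimH_of_separated hK.isClosed hne hm hρ0 hρ1 (fun j => c (A.equivFin.symm j))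
    (fun j x hx => hcmap _ x hx) ?_ ht0 ?_
  · intro i j hij x hx y hy
    have hij' : A.equivFin.symm i ≠ A.equivFin.symm j := fun h => hij (A.equivFin.symm.injective h)
    generalize A.equivFin.symm i = α at hij' ⊢
    generalize A.equivFin.symm j = β at hij' ⊢
    have hfar : ((L : ℝ) - 1) * (1 / 2) ^ n ≤ dist (p α) (p β) := by
      apply le_dist_of_boxIdx_modEq
      · rw [hpα, hpα]
        exact fun h => hij' (Subtype.ext h)
      · intro k
        rw [hpα, hpα]
        have h1 := congrFun (Finset.mem_filter.1 α.2).2 k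
        have h2 := congrFun (Finset.mem_filter.1 β.2).2 k
        exact h1.trans h2.symm
    have h1 := hpiece α x hx
    have h2 := hpiece β y hy
    have h3 := dist_triangle4 (p α) (c α + (1 / 2 : ℝ) ^ n • x) (c β + (1 / 2 : ℝ) ^ n • y) (p β)
    rw [dist_comm (p α) (c α + _)] at h3
    nlinarith
  · have h2 : (((1 : ℝ) / 2) ^ n) ^ (t : ℝ) = (Real.exp (n * (t * Real.log 2)))⁻¹ := by
      rw [← Real.exp_neg, Real.rpow_def_of_pos hρ0, Real.log_pow, one_div, Real.log_inv]
      congr 1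
      ring
    rw [h2, ← div_eq_mul_inv, le_div_iff₀ (Real.exp_pos _), one_mul]
    exact hr

/-- Hausdorff and upper box dimension of a homogeneous self-similar set coincide. -/
lemma dimH_toReal_mul_log_two {K : Set E2} (hK : IsCompact K) (hne : K.Nonempty)
    {b : Fin 3 → E2} (hsub : ∀ i, ∀ v ∈ K, (1 / 2 : ℝ) • v + b i ∈ K)
    (hcov : ∀ p ∈ K, ∃ i, ∃ q ∈ K, (1 / 2 : ℝ) • q + b i = p) :
    (dimH K).toReal * Real.log 2 = boxRate K := by
  have hl2 : 0 < Real.log 2 := Real.log_pos one_lt_two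
  have htop : dimH K ≠ ⊤ := Real.dimH_ne_top K
  apply le_antisymm
  · by_contra! h
    obtain ⟨e, he1, he2⟩ := exists_between ((div_lt_iff₀ hl2).2 h)
    have he0 : 0 ≤ e := (div_nonneg (boxRate_nonneg hK.isBounded hne) hl2.le).trans he1.le
    have := dimH_le_of_boxRate_lt (d := ⟨e, he0⟩) hK.isBounded hne ((div_lt_iff₀ hl2).1 he1)
    have := ENNReal.toReal_mono ENNReal.coe_ne_top this
    exact absurd this (not_le.2 he2)
  · by_contra! h
    obtain ⟨e, he1, he2⟩ := exists_between ((lt_div_iff₀ hl2).2 h)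
    have he0 : 0 < e := ENNReal.toReal_nonneg.trans_lt he1
    have := le_dimH_of_lt_boxRate (t := ⟨e, he0.le⟩) hK hne hsub hcov he0 ((lt_div_iff₀ hl2).1 he2)
    have := ENNReal.toReal_mono htop this
    exact absurd this (not_le.2 he1)

/-! ### Surjectivity of the coding projection -/

/-- Every point of an attractor has a code. -/
lemma exists_code {S : Fin 3 → E2 → E2} {K : Set E2} (hcov : ∀ p ∈ K, ∃ i, ∃ q ∈ K, S i q = p)
    {π : Sig 3 → E2} (hπ : ∀ x, (⋂ n, itIm S K x n) = {π x}) :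
    ∀ p ∈ K, ∃ x, π x = p := by
  intro p hp
  choose! i q hqK hq using hcov
  have horb : ∀ k, q^[k] p ∈ K := by
    intro k
    induction k with
    | zero => exact hp
    | succ k ih => rw [Function.iterate_succ_apply']; exact hqK _ ih
  have hmem : ∀ n k, q^[k] p ∈ itIm S K (fun j => i (q^[k + j] p)) n := by
    intro n
    induction n with
    | zero => exact fun k => horb k
    | succ n ih =>
      intro k
      refine ⟨q^[k + 1] p, ?_, ?_⟩
      · have := ih (k + 1)
        have hs : shift (fun j => i (q^[k + j] p)) = fun j => i (q^[k + 1 + j] p) := by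
          funext j
          simp only [shift]
          rw [show k + (j + 1) = k + 1 + j by ring]
        rwa [hs]
      · rw [Function.iterate_succ_apply']
        exact hq _ (horb k)
  refine ⟨fun j => i (q^[0 + j] p), ?_⟩
  have : p ∈ ⋂ n, itIm S K (fun j => i (q^[0 + j] p)) n := mem_iInter.2 fun n => hmem n 0
  rw [hπ] at this
  exact this.symm

/-- **Example 3.2** (overlapping Sierpiński triangle). Let `0 < a₁ < 1/2` and
`0 < a₂ < √3/4`, let `K_{a₁,a₂}` be the attractor of the IFS `S₁ v = v/2`,
`S₂ v = v/2 + (a₁,a₂)`, `S₃ v = v/2 + (1/4,√3/4)` on `ℝ²`, with canonical projection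
`π : {1,2,3}^ℕ → K_{a₁,a₂}`. Then `dim_H K_{a₁,a₂}` is the unique real root `t` of
`P_π(−t·log 2) = 0`. -/
theorem dimH_overlappingSierpinski_unique_root {a₁ a₂ : ℝ}
    (ha₁0 : 0 < a₁) (ha₁ : a₁ < 1 / 2) (ha₂0 : 0 < a₂) (ha₂ : a₂ < Real.sqrt 3 / 4)
    (K : Set (EuclideanSpace ℝ (Fin 2))) (hKcomp : IsCompact K) (hKne : K.Nonempty)
    (hKattr : K = ⋃ i, (sierpMap a₁ a₂ i) '' K)
    (π : Sig 3 → EuclideanSpace ℝ (Fin 2))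
    (hπ : ∀ x, (⋂ n, itIm (sierpMap a₁ a₂) K x n) = {π x}) :
    (∃! t : ℝ, projPressure K π (fun _ => -t * Real.log 2) = 0)
    ∧ projPressure K π (fun _ => -(dimH K).toReal * Real.log 2) = 0 := by
  have hl2 : 0 < Real.log 2 := Real.log_pos one_lt_two
  let b : Fin 3 → EuclideanSpace ℝ (Fin 2) :=
    ![0, (WithLp.equiv 2 (Fin 2 → ℝ)).symm ![a₁, a₂],
      (WithLp.equiv 2 (Fin 2 → ℝ)).symm ![1 / 4, Real.sqrt 3 / 4]]
  have hS : ∀ i v, sierpMap a₁ a₂ i v = (1 / 2 : ℝ) • v + b i := by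
    intro i v
    fin_cases i <;> simp [sierpMap, b]
  have hcovS : ∀ p ∈ K, ∃ i, ∃ q ∈ K, sierpMap a₁ a₂ i q = p := by
    intro p hp
    rw [hKattr] at hp
    exact mem_iUnion.1 hp
  have hsub : ∀ i, ∀ v ∈ K, (1 / 2 : ℝ) • v + b i ∈ K := by
    intro i v hv
    rw [← hS, hKattr]
    exact mem_iUnion.2 ⟨i, v, hv, rfl⟩
  have hcov : ∀ p ∈ K, ∃ i, ∃ q ∈ K, (1 / 2 : ℝ) • q + b i = p := by
    intro p hp
    obtain ⟨i, q, hq, h⟩ := hcovS p hp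
    exact ⟨i, q, hq, by rw [← hS]; exact h⟩
  have hP := projPressure_const hKcomp.isBounded hKne π (exists_code hcovS hπ)
  have hdim := dimH_toReal_mul_log_two hKcomp hKne hsub hcov
  have h0 : projPressure K π (fun _ => -(dimH K).toReal * Real.log 2) = 0 := by
    rw [hP, ← hdim]
    ring
  refine ⟨⟨(dimH K).toReal, h0, fun t ht => ?_⟩, h0⟩
  have ht' : projPressure K π (fun _ => -t * Real.log 2) = 0 := ht
  rw [hP, ← hdim] at ht'
  refine mul_right_cancel₀ hl2.ne' ?_
  linarith

end
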